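/- Let U ⊆ ℝⁿ be open, let g̃_{μν} : U → ℝ be smooth, symmetric and pointwise invertible with smooth inverse g̃^{μν}, let A_{iμ} : U → ℝ be smooth (i ∈ {1,2,3}), and let h > 0 be constant. Define Ã^{αi} := −(1/h) g̃^{αν} A_{iν}, h̃^{ij} := (1/h) δ^{ij} + (1/h²) g̃^{μν} A_{iν} A_{jμ}, Γ̃^σ_{μν} := (1/2) g̃^{σρ}(∂_μ g̃_{νρ} + ∂_ν g̃_{μρ} − ∂_ρ g̃_{μν}), F^μ_{βi} := (1/2) g̃^{αμ}(∂_α A_{βi} − ∂_β A_{αi} − (1/h) ε_{ijk} A_{jα} A_{kβ}), Γ^σ_{μν} := Γ̃^σ_{μν} − (1/h)(A_{μi} F^σ_{νi} + A_{νi} F^σ_{μi}), D^μ_{ij} := 0, E^k_{αβ} := −(1/(2h))(∂_α A_{βk} + ∂_β A_{αk} − 2 A_{kμ} Γ^μ_{αβ}), B^k_{αi} := −(1/h) A_{kμ} F^μ_{αi} − (1/(2h)) A_{jα} ε_{kij}, H^i_{jk} := −(1/2) ε_{ijk}. Let V be the complex vector space of totally symmetric traceless rank-l tensors (l ≥ 0)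 and let D_i ∈ End(V) be the operators defined below (D_i = 0 for l = 0). Then for every smooth f : U → V: g̃^{αβ} ∂_α ∂_β f + h̃^{ij} D_i D_j f + 2 Ã^{αi} ∂_α (D_i f) + ( E^i_{αβ} g̃^{αβ} + 2 B^i_{αj} Ã^{αj} + H^i_{jk} h̃^{jk} ) D_i f + ( −Γ^μ_{αβ} g̃^{αβ} + 2 F^μ_{αj} Ã^{αj} + D^μ_{jk} h̃^{jk} ) ∂_μ f = g̃^{αβ} ( (∂_α − (1/h) A_{iα} D_i)(∂_β − (1/h) A_{jβ} D_j) f − Γ̃^μ_{αβ} (∂_μ − (1/h) A_{iμ} D_i) f ) − (l(l+1)/h) f. -/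

import Mathlib

noncomputable section

/-- The totally antisymmetric Levi-Civita symbol on three indices with ε₀₁₂ = 1
(indices written 1,2,3 in the paper). -/
def eps (i j k : Fin 3) : ℝ :=
  ((((i : ℤ) - (j : ℤ)) * ((j : ℤ) - (k : ℤ)) * ((k : ℤ) - (i : ℤ))) / 2 : ℤ)

/-- The Levi-Civita symbol as a complex number. -/
def epsC (i j k : Fin 3) : ℂ := ((eps i j k : ℝ) : ℂ)

/-- The partial derivative `∂_μ f` of a function on `ℝⁿ`. -/
def pd {n : ℕ} {W : Type*} [NormedAddCommGroup W] [NormedSpace ℝ W]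
    (μ : Fin n) (f : (Fin n → ℝ) → W) : (Fin n → ℝ) → W :=
  fun x => fderiv ℝ f x (Pi.single μ 1)

/-- The index tuple obtained from `v : Fin l → Fin 3` by deleting the `r`-th entry, keeping
the remaining entries in order, and appending `k` as the new last entry. -/
def removeAppend (l : ℕ) (v : Fin l → Fin 3) (r : Fin l) (k : Fin 3) : Fin l → Fin 3 :=
  fun t =>
    if h : (t : ℕ) + 1 < l then
      (if (t : ℕ) < (r : ℕ) then v t else v ⟨(t : ℕ) + 1, h⟩)
    else k

/-- The operator `D_i` on rank-`l` tensors: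
`(D_i f)_{i₁…i_l} = −∑_{r=1}^{l} ∑_{k} ε_{k i i_r} f_{i₁…î_r…i_l k}`. -/
def Dop (l : ℕ) (i : Fin 3) (f : (Fin l → Fin 3) → ℂ) : (Fin l → Fin 3) → ℂ :=
  fun v => -∑ r : Fin l, ∑ k : Fin 3, epsC k i (v r) * f (removeAppend l v r k)

/-- A rank-`l` tensor is totally symmetric if its components are invariant under every
permutation of the indices. -/
def IsTotallySymmetric (l : ℕ) (f : (Fin l → Fin 3) → ℂ) : Prop :=
  ∀ (σ : Equiv.Perm (Fin l)) (v : Fin l → Fin 3), f (v ∘ σ) = f v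

/-- A rank-`l` tensor is traceless if contracting any two of its indices against the
Kronecker delta gives zero. -/
def IsTraceless (l : ℕ) (f : (Fin l → Fin 3) → ℂ) : Prop :=
  ∀ (r s : Fin l), r ≠ s → ∀ v : Fin l → Fin 3,
    ∑ k : Fin 3, f (fun t => if t = r then k else if t = s then k else v t) = 0

section Casimir

/-- The Levi-Civita symbol as an integer. -/
def epsInt (i j k : Fin 3) : ℤ :=
  (((i : ℤ) - (j : ℤ)) * ((j : ℤ) - (k : ℤ)) * ((k : ℤ) - (i : ℤ))) / 2

lemma epsC_eq_intCast (i j k : Fin 3) : epsC i j k = (epsInt i j k : ℂ) :=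
  Complex.ofReal_intCast _

lemma eps_contract (a b k m : Fin 3) :
    ∑ i, epsC k i a * epsC m i b
      = (if k = m ∧ a = b then 1 else 0) - (if k = b ∧ a = m then 1 else 0) := by
  simp only [epsC_eq_intCast]
  revert a b k m
  exact_mod_cast (by decide : ∀ a b k m : Fin 3, ∑ i, epsInt k i a * epsInt m i b
      = (if k = m ∧ a = b then 1 else 0) - (if k = b ∧ a = m then 1 else 0))

lemma eps_contract_two (a m : Fin 3) :
    ∑ i, ∑ k, epsC k i a * epsC m i k = if m = a then -2 else 0 := by
  simp only [epsC_eq_intCast]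
  revert a m
  exact_mod_cast (by decide : ∀ a m : Fin 3,
    ∑ i, ∑ k, epsInt k i a * epsInt m i k = if m = a then -2 else 0)

lemma eps_swap (i j k : Fin 3) : eps i k j = -eps i j k := by
  fin_cases i <;> fin_cases j <;> fin_cases k <;> simp [eps]

variable {l : ℕ}

lemma removeAppend_eq (r : Fin l) :
    ∃ σ : Equiv.Perm (Fin l), ∀ (v : Fin l → Fin 3) (k : Fin 3),
      removeAppend l v r k = Function.update v r k ∘ σ := by
  let s : Fin l → Fin l := fun t =>
    if h : (t : ℕ) + 1 < l then
      (if (t : ℕ) < (r : ℕ) then t else ⟨(t : ℕ) + 1, h⟩)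
    else r
  have hs : Function.Injective s := by
    intro a b hab
    have h := congrArg Fin.val hab
    have ha := a.2
    have hb := b.2
    have hr := r.2
    simp only [s] at h
    ext
    split_ifs at h <;> (try dsimp only at h) <;> omega
  refine ⟨Equiv.ofBijective s (Finite.injective_iff_bijective.mp hs), fun v k => ?_⟩
  funext t
  simp only [removeAppend, Function.comp, Equiv.ofBijective_apply, s, Function.update_apply]
  have ht := t.2
  have hr := r.2
  by_cases h1 : (t : ℕ) + 1 < l
  · by_cases h2 : (t : ℕ) < r
    · simp only [h1, h2, dif_pos, if_true]
      rw [if_neg (by rw [Fin.ext_iff]; omega)]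
    · simp only [h1, h2, dif_pos, if_false]
      rw [if_neg (by rw [Fin.ext_iff]; simp only []; omega)]
  · simp [h1]

lemma Dop_apply_symm {f : (Fin l → Fin 3) → ℂ} (hf : IsTotallySymmetric l f)
    (i : Fin 3) (v : Fin l → Fin 3) :
    Dop l i f v = -∑ r : Fin l, ∑ k : Fin 3, epsC k i (v r) * f (Function.update v r k) := by
  unfold Dop
  congr 1
  refine Finset.sum_congr rfl fun r _ => Finset.sum_congr rfl fun k _ => ?_
  obtain ⟨σ, hσ⟩ := removeAppend_eq r
  rw [hσ, hf]

lemma Dop_symm {f : (Fin l → Fin 3) → ℂ} (hf : IsTotallySymmetric l f) (i : Fin 3) :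
    IsTotallySymmetric l (Dop l i f) := by
  intro σ v
  rw [Dop_apply_symm hf, Dop_apply_symm hf]
  congr 1
  rw [← Equiv.sum_comp σ fun r => ∑ k, epsC k i (v r) * f (Function.update v r k)]
  refine Finset.sum_congr rfl fun r _ => Finset.sum_congr rfl fun k _ => ?_
  rw [← hf σ (Function.update v (σ r) k), Function.update_comp_eq_of_injective _ σ.injective]
  rfl

lemma casimir_pair {f : (Fin l → Fin 3) → ℂ} (hf : IsTotallySymmetric l f)
    (ht : IsTraceless l f) (v : Fin l → Fin 3) (r s : Fin l) :
    ∑ k, ∑ m, (∑ i, epsC k i (v r) * epsC m i (Function.update v r k s)) *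
        f (Function.update (Function.update v r k) s m)
      = (if s = r then -2 else -1) * f v := by
  by_cases h : s = r
  · subst h
    simp only [Function.update_self, Function.update_idem, if_true]
    rw [Finset.sum_comm]
    have h2 : ∀ m, ∑ k, (∑ i, epsC k i (v s) * epsC m i k) * f (Function.update v s m)
        = if m = v s then -2 * f (Function.update v s m) else 0 := by
      intro m
      rw [← Finset.sum_mul, Finset.sum_comm, eps_contract_two]
      split_ifs <;> simp
    simp only [h2, Finset.sum_ite_eq', Finset.mem_univ, if_true, Function.update_eq_self]
  · have hswap : f (Function.update (Function.update v r (v s)) s (v r)) = f v := by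
      rw [← hf (Equiv.swap r s) v]
      congr 1
      funext t
      simp only [Function.update_apply, Function.comp, Equiv.swap_apply_def]
      split_ifs <;> simp_all
    have htr : ∑ k, f (Function.update (Function.update v r k) s k) = 0 := by
      rw [← ht s r h v]
      refine Finset.sum_congr rfl fun k _ => congrArg f ?_
      funext t
      simp only [Function.update_apply]
    simp only [Function.update_of_ne h, eps_contract, if_neg h, sub_mul, Finset.sum_sub_distrib]
    have e1 : ∑ k, ∑ m, (if k = m ∧ v r = v s then (1 : ℂ) else 0) *
        f (Function.update (Function.update v r k) s m) = 0 := by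
      by_cases hv : v r = v s
      · simpa [hv] using htr
      · simp [hv]
    have e2 : ∑ k, ∑ m, (if k = v s ∧ v r = m then (1 : ℂ) else 0) *
        f (Function.update (Function.update v r k) s m) = f v := by
      rw [← hswap]
      simp [ite_and]
    rw [e1, e2]
    ring

/-- The quadratic Casimir of the operators `D_i` on rank-`l` symmetric traceless tensors. -/
lemma casimir {f : (Fin l → Fin 3) → ℂ} (hf : IsTotallySymmetric l f)
    (ht : IsTraceless l f) :
    ∑ i, Dop l i (Dop l i f) = -((l * (l + 1) : ℝ)) • f := by
  funext v
  have key : (∑ i, Dop l i (Dop l i f)) v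
      = ∑ r, ∑ s, ∑ k, ∑ m, (∑ i, epsC k i (v r) * epsC m i (Function.update v r k s)) *
        f (Function.update (Function.update v r k) s m) := by
    rw [Finset.sum_apply]
    simp only [Dop_apply_symm (Dop_symm hf _), Dop_apply_symm hf, mul_neg,
      Finset.sum_neg_distrib, neg_neg, Finset.mul_sum, Finset.sum_mul]
    rw [Finset.sum_comm]
    refine Finset.sum_congr rfl fun r _ => ?_
    rw [Finset.sum_comm, Finset.sum_comm (s := (Finset.univ : Finset (Fin l)))]
    refine Finset.sum_congr rfl fun k _ => ?_
    rw [Finset.sum_comm]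
    refine Finset.sum_congr rfl fun s _ => ?_
    rw [Finset.sum_comm]
    refine Finset.sum_congr rfl fun m _ => Finset.sum_congr rfl fun i _ => ?_
    ring
  have hcount : ∀ r : Fin l, ∑ s : Fin l, (if s = r then (-2 : ℂ) else -1) = -((l : ℂ) + 1) := by
    intro r
    have : ∀ s : Fin l, (if s = r then (-2 : ℂ) else -1) = -1 + if s = r then -1 else 0 := by
      intro s; split_ifs <;> norm_num
    simp only [this, Finset.sum_add_distrib, Finset.sum_ite_eq', Finset.mem_univ, if_true,
      Finset.sum_const, Finset.card_univ, Fintype.card_fin, nsmul_eq_mul]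
    ring
  rw [key]
  simp only [casimir_pair hf ht, ← Finset.sum_mul, hcount, Finset.sum_const, Finset.card_univ,
    Fintype.card_fin, nsmul_eq_mul, Pi.smul_apply, Complex.real_smul]
  push_cast
  ring

end Casimir

section Calculus

/-- `Dop` as a real continuous linear map. -/
def DopL (l : ℕ) (i : Fin 3) : ((Fin l → Fin 3) → ℂ) →L[ℝ] ((Fin l → Fin 3) → ℂ) :=
  LinearMap.toContinuousLinearMap
    { toFun := Dop l i
      map_add' := fun f g => by
        funext v
        simp only [Dop, Pi.add_apply, mul_add, Finset.sum_add_distrib, neg_add]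
      map_smul' := fun c f => by
        funext v
        simp only [Dop, Pi.smul_apply, Complex.real_smul, RingHom.id_apply, mul_neg,
          Finset.mul_sum]
        congr 1
        refine Finset.sum_congr rfl fun r _ => Finset.sum_congr rfl fun k _ => ?_
        ring }

lemma DopL_apply (l : ℕ) (i : Fin 3) (f : (Fin l → Fin 3) → ℂ) : DopL l i f = Dop l i f := rfl

variable {n : ℕ} {W : Type*} [NormedAddCommGroup W] [NormedSpace ℝ W]

lemma pd_clm_comp {f : (Fin n → ℝ) → W} {x : Fin n → ℝ} (L : W →L[ℝ] W)
    (hf : DifferentiableAt ℝ f x) (α : Fin n) :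
    pd α (fun y => L (f y)) x = L (pd α f x) := by
  have h : HasFDerivAt (fun y => L (f y)) (L.comp (fderiv ℝ f x)) x :=
    L.hasFDerivAt.comp x hf.hasFDerivAt
  unfold pd
  rw [h.fderiv]
  rfl

lemma pd_covariant {ι : Type*} [Fintype ι] {q f : (Fin n → ℝ) → W} {a : ι → (Fin n → ℝ) → ℝ}
    {x : Fin n → ℝ} (L : ι → W →L[ℝ] W) (c : ℝ) (hq : DifferentiableAt ℝ q x)
    (hf : DifferentiableAt ℝ f x) (ha : ∀ i, DifferentiableAt ℝ (a i) x) (α : Fin n) :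
    pd α (fun y => q y - c • ∑ i, a i y • L i (f y)) x
      = pd α q x - c • ∑ i, (pd α (a i) x • L i (f x) + a i x • L i (pd α f x)) := by
  have hL : ∀ i, HasFDerivAt (fun y => L i (f y)) ((L i).comp (fderiv ℝ f x)) x :=
    fun i => (L i).hasFDerivAt.comp x hf.hasFDerivAt
  have hs := HasFDerivAt.fun_sum (u := Finset.univ)
    fun i _ => (ha i).hasFDerivAt.smul (hL i)
  have := hq.hasFDerivAt.sub (hs.const_smul c)
  unfold pd
  erw [this.fderiv]
  simp [add_comm]

end Calculus

section Algebra

lemma inverse_symm {n : ℕ} {g gi : Fin n → Fin n → ℝ} (hs : ∀ μ ν, g μ ν = g ν μ)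
    (h : ∀ μ ν, ∑ ρ, g μ ρ * gi ρ ν = if μ = ν then 1 else 0) (μ ν : Fin n) :
    gi μ ν = gi ν μ := by
  have hG : (Matrix.of g).transpose = Matrix.of g := by ext a b; exact hs b a
  have h1 : Matrix.of g * Matrix.of gi = 1 := by
    ext a b
    simp [Matrix.mul_apply, Matrix.one_apply, h]
  have h2 := congrArg Matrix.transpose h1
  rw [Matrix.transpose_mul, hG, Matrix.transpose_one] at h2
  have h3 : (Matrix.of gi).transpose = Matrix.of gi := left_inv_eq_right_inv h2 h1
  exact congrFun (congrFun h3 ν) μ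

lemma sum_antisymm {ι : Type*} [Fintype ι] (a s : ι → ι → ℝ) (ha : ∀ j k, a k j = -a j k)
    (hs : ∀ j k, s j k = s k j) : ∑ j, ∑ k, a j k * s j k = 0 := by
  have h : ∑ j, ∑ k, a j k * s j k = -∑ j, ∑ k, a j k * s j k := by
    conv_lhs => rw [Finset.sum_comm]
    rw [← Finset.sum_neg_distrib]
    refine Finset.sum_congr rfl fun j _ => ?_
    rw [← Finset.sum_neg_distrib]
    refine Finset.sum_congr rfl fun k _ => ?_
    rw [ha, hs k j]
    ring
  linarith

lemma sum_comm_pairs {ι κ τ υ W : Type*} [Fintype ι] [Fintype κ] [Fintype τ] [Fintype υ]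
    [AddCommMonoid W] (φ : ι → κ → τ → υ → W) :
    ∑ i, ∑ j, ∑ α, ∑ β, φ i j α β = ∑ α, ∑ β, ∑ i, ∑ j, φ i j α β := by
  have h := Finset.sum_comm (s := (Finset.univ : Finset (ι × κ)))
    (t := (Finset.univ : Finset (τ × υ))) (f := fun x y => φ x.1 x.2 y.1 y.2)
  simpa only [Fintype.sum_prod_type] using h

lemma covariant_laplacian_expansion {ι : Type*} [Fintype ι] [DecidableEq ι] {n : ℕ} {W : Type*}
    [AddCommGroup W] [Module ℝ W] (D : ι → W →ₗ[ℝ] W) (g : Fin n → Fin n → ℝ)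
    (hg : ∀ μ ν, g μ ν = g ν μ) (a : ι → Fin n → ℝ) (da : Fin n → ι → Fin n → ℝ)
    (G : Fin n → Fin n → Fin n → ℝ) (c K : ℝ) (w : W) (p : Fin n → W) (pp : Fin n → Fin n → W)
    (hK : ∑ i, D i (D i w) = -K • w) :
    (∑ α, ∑ β, g α β • pp α β)
      + (∑ i, ∑ j, (c * (if i = j then 1 else 0)
          + c ^ 2 * ∑ μ, ∑ ν, g μ ν * a i ν * a j μ) • D i (D j w))
      + 2 • (∑ α, ∑ i, (-c * ∑ ν, g α ν * a i ν) • D i (p α))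
      + (∑ i, (-c * (∑ α, ∑ β, g α β * da α i β)
          + c * ∑ μ, a i μ * ∑ α, ∑ β, G μ α β * g α β) • D i w)
      + (∑ μ, (-∑ α, ∑ β, G μ α β * g α β) • p μ)
    = (∑ α, ∑ β, g α β • ((pp α β - c • ∑ i, (da α i β • D i w + a i β • D i (p α)))
          - c • (∑ i, a i α • D i (p β - c • ∑ j, a j β • D j w))
          - ∑ μ, G μ α β • (p μ - c • ∑ i, a i μ • D i w)))
        - (c * K) • w := by
  have e1 : ∑ i, ∑ j, (c * (if i = j then 1 else 0)
          + c ^ 2 * ∑ μ, ∑ ν, g μ ν * a i ν * a j μ) • D i (D j w)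
      = -(c * K) • w
        + c ^ 2 • ∑ α, ∑ β, g α β • ∑ i, ∑ j, (a i α * a j β) • D i (D j w) := by
    simp only [add_smul, Finset.sum_add_distrib]
    congr 1
    · simp only [mul_ite, mul_one, mul_zero, ite_smul, zero_smul, Finset.sum_ite_eq,
        Finset.mem_univ, if_true, ← Finset.smul_sum, hK]
      module
    · simp only [mul_smul, Finset.sum_smul, ← Finset.smul_sum]
      congr 1
      have h : ∀ i j, ∑ μ, ∑ ν, g μ ν • a i ν • a j μ • D i (D j w)
          = ∑ α, ∑ β, g α β • a i α • a j β • D i (D j w) := by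
        intro i j
        rw [Finset.sum_comm]
        refine Finset.sum_congr rfl fun α _ => Finset.sum_congr rfl fun β _ => ?_
        rw [hg]
      simp only [h, Finset.smul_sum]
      rw [sum_comm_pairs]
  have e2 : ∑ α, ∑ i, (-c * ∑ ν, g α ν * a i ν) • D i (p α)
      = -c • ∑ α, ∑ β, g α β • ∑ i, a i β • D i (p α) := by
    simp only [mul_smul, Finset.sum_smul, Finset.smul_sum]
    refine Finset.sum_congr rfl fun α _ => ?_
    rw [Finset.sum_comm]
  have e3 : ∑ α, ∑ β, g α β • ∑ i, a i α • D i (p β)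
      = ∑ α, ∑ β, g α β • ∑ i, a i β • D i (p α) := by
    rw [Finset.sum_comm]
    refine Finset.sum_congr rfl fun α _ => Finset.sum_congr rfl fun β _ => ?_
    rw [hg]
  have e4 : ∑ i, (-c * (∑ α, ∑ β, g α β * da α i β)
          + c * ∑ μ, a i μ * ∑ α, ∑ β, G μ α β * g α β) • D i w
      = -c • (∑ α, ∑ β, g α β • ∑ i, da α i β • D i w)
        + c • ∑ α, ∑ β, g α β • ∑ μ, G μ α β • ∑ i, a i μ • D i w := by
    simp only [add_smul, mul_smul, Finset.sum_smul, Finset.sum_add_distrib, ← Finset.smul_sum]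
    congr 2
    · simp only [Finset.smul_sum]
      rw [Finset.sum_comm]
      refine Finset.sum_congr rfl fun α _ => ?_
      rw [Finset.sum_comm]
    · simp only [Finset.smul_sum]
      rw [sum_comm_pairs]
      refine Finset.sum_congr rfl fun α _ => Finset.sum_congr rfl fun β _ => ?_
      rw [Finset.sum_comm]
      refine Finset.sum_congr rfl fun μ _ => Finset.sum_congr rfl fun i _ => ?_
      module
  have e5 : ∑ μ, (-∑ α, ∑ β, G μ α β * g α β) • p μ
      = -∑ α, ∑ β, g α β • ∑ μ, G μ α β • p μ := by
    simp only [neg_smul, Finset.sum_neg_distrib, Finset.sum_smul, Finset.smul_sum]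
    congr 1
    rw [Finset.sum_comm]
    refine Finset.sum_congr rfl fun α _ => ?_
    rw [Finset.sum_comm]
    refine Finset.sum_congr rfl fun β _ => Finset.sum_congr rfl fun μ _ => ?_
    rw [smul_smul, mul_comm]
  have e6 : ∑ α, ∑ β, g α β • ((pp α β - c • ∑ i, (da α i β • D i w + a i β • D i (p α)))
          - c • (∑ i, a i α • D i (p β - c • ∑ j, a j β • D j w))
          - ∑ μ, G μ α β • (p μ - c • ∑ i, a i μ • D i w))
      = (∑ α, ∑ β, g α β • pp α β)
        - c • (∑ α, ∑ β, g α β • ∑ i, da α i β • D i w)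
        - c • (∑ α, ∑ β, g α β • ∑ i, a i β • D i (p α))
        - c • (∑ α, ∑ β, g α β • ∑ i, a i α • D i (p β))
        + c ^ 2 • (∑ α, ∑ β, g α β • ∑ i, ∑ j, (a i α * a j β) • D i (D j w))
        - (∑ α, ∑ β, g α β • ∑ μ, G μ α β • p μ)
        + c • ∑ α, ∑ β, g α β • ∑ μ, G μ α β • ∑ i, a i μ • D i w := by
    simp only [Finset.smul_sum (r := c), Finset.smul_sum (r := c ^ 2),
      ← Finset.sum_sub_distrib, ← Finset.sum_add_distrib]
    refine Finset.sum_congr rfl fun α _ => Finset.sum_congr rfl fun β _ => ?_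
    have h1 : ∑ i, a i α • D i (p β - ∑ j, c • a j β • D j w)
        = (∑ i, a i α • D i (p β)) - c • ∑ i, ∑ j, (a i α * a j β) • D i (D j w) := by
      simp only [map_sub, map_sum, map_smul, smul_sub, Finset.sum_sub_distrib, Finset.smul_sum,
        smul_smul]
      congr 1
      refine Finset.sum_congr rfl fun i _ => Finset.sum_congr rfl fun j _ => ?_
      congr 1
      ring
    have h2 : ∑ μ, G μ α β • (p μ - ∑ i, c • a i μ • D i w)
        = (∑ μ, G μ α β • p μ) - c • ∑ μ, G μ α β • ∑ i, a i μ • D i w := by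
      simp only [smul_sub, Finset.sum_sub_distrib, Finset.smul_sum, smul_smul]
      congr 1
      refine Finset.sum_congr rfl fun i _ => Finset.sum_congr rfl fun j _ => ?_
      congr 1
      ring
    simp only [← Finset.smul_sum (r := c)] at *
    rw [h1, h2, Finset.sum_add_distrib]
    module
  rw [e1, e2, e4, e5, e6, e3]
  module

lemma qlc_derivative_coefficient {ι : Type*} [Fintype ι] {n : ℕ} (g : Fin n → Fin n → ℝ)
    (hg : ∀ μ ν, g μ ν = g ν μ) (a : ι → Fin n → ℝ) (F : Fin n → ι → ℝ) (G : Fin n → Fin n → ℝ)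
    (c : ℝ) :
    ∑ α, ∑ β, (G α β - c * ∑ i, (a i α * F β i + a i β * F α i)) * g α β
      = (∑ α, ∑ β, G α β * g α β) - 2 * c * ∑ α, ∑ i, F α i * ∑ ν, g α ν * a i ν := by
  have h1 : ∀ α β, (G α β - c * ∑ i, (a i α * F β i + a i β * F α i)) * g α β
      = G α β * g α β - c * ∑ i, a i α * F β i * g β α - c * ∑ i, a i β * F α i * g α β := by
    intro α β
    rw [← hg α β, Finset.sum_add_distrib, ← Finset.sum_mul, ← Finset.sum_mul]
    ring
  have h2 : ∑ α, ∑ i, F α i * ∑ ν, g α ν * a i ν = ∑ α, ∑ β, ∑ i, a i β * F α i * g α β := by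
    refine Finset.sum_congr rfl fun α _ => ?_
    rw [Finset.sum_comm]
    refine Finset.sum_congr rfl fun i _ => ?_
    rw [Finset.mul_sum]
    refine Finset.sum_congr rfl fun ν _ => ?_
    ring
  have h3 : ∑ α, ∑ β, ∑ i, a i α * F β i * g β α = ∑ α, ∑ β, ∑ i, a i β * F α i * g α β :=
    Finset.sum_comm
  simp only [h1, Finset.sum_sub_distrib, ← Finset.mul_sum, h2, h3]
  ring

end Algebra

/-- The QRG Laplacian on the product of spacetime and a constant round fuzzy sphere of
metric `h δ_{ij}`, acting on a totally symmetric traceless tensor-valued field, equals the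
gauge-covariant Laplacian for the effective metric `g̃` minus the mass term `l(l+1)/h`. -/
theorem stmt15 (n l : ℕ) (hn : 1 ≤ n)
    (U : Set (Fin n → ℝ)) (hU : IsOpen U)
    (gt gtinv : Fin n → Fin n → (Fin n → ℝ) → ℝ)
    (A : Fin 3 → Fin n → (Fin n → ℝ) → ℝ)
    (h0 : ℝ) (hh0 : 0 < h0)
    (hgt_smooth : ∀ μ ν, ContDiffOn ℝ (⊤ : ℕ∞) (gt μ ν) U)
    (hgtinv_smooth : ∀ μ ν, ContDiffOn ℝ (⊤ : ℕ∞) (gtinv μ ν) U)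
    (hA_smooth : ∀ i μ, ContDiffOn ℝ (⊤ : ℕ∞) (A i μ) U)
    (hgt_symm : ∀ μ ν x, gt μ ν x = gt ν μ x)
    (hgt_inv : ∀ x ∈ U, ∀ μ ν, ∑ ρ, gt μ ρ x * gtinv ρ ν x = if μ = ν then 1 else 0)
    (hgt_inv' : ∀ x ∈ U, ∀ μ ν, ∑ ρ, gtinv μ ρ x * gt ρ ν x = if μ = ν then 1 else 0)
    -- Ã^{αi}
    (At : Fin n → Fin 3 → (Fin n → ℝ) → ℝ)
    (hAt : ∀ α i x, At α i x = -(1/h0) * ∑ ν, gtinv α ν x * A i ν x)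
    -- h̃^{ij}
    (ht : Fin 3 → Fin 3 → (Fin n → ℝ) → ℝ)
    (hht : ∀ i j x, ht i j x = (1/h0) * (if i = j then 1 else 0)
        + (1/h0^2) * ∑ μ, ∑ ν, gtinv μ ν x * A i ν x * A j μ x)
    -- Γ̃
    (Γt : Fin n → Fin n → Fin n → (Fin n → ℝ) → ℝ)
    (hΓt : ∀ σ μ ν x, Γt σ μ ν x = (1/2) * ∑ ρ, gtinv σ ρ x *
        (pd μ (gt ν ρ) x + pd ν (gt μ ρ) x - pd ρ (gt μ ν) x))
    -- the quantum Levi-Civita connection coefficients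
    (F : Fin n → Fin n → Fin 3 → (Fin n → ℝ) → ℝ)
    (hF : ∀ μ' β i x, F μ' β i x = (1/2) * ∑ α, gtinv α μ' x *
        (pd α (A i β) x - pd β (A i α) x - (1/h0) * ∑ j, ∑ k, eps i j k * A j α x * A k β x))
    (Γ : Fin n → Fin n → Fin n → (Fin n → ℝ) → ℝ)
    (hΓ : ∀ σ μ ν x, Γ σ μ ν x = Γt σ μ ν x
        - (1/h0) * ∑ i, (A i μ x * F σ ν i x + A i ν x * F σ μ i x))
    (Dq : Fin n → Fin 3 → Fin 3 → (Fin n → ℝ) → ℝ)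
    (hDq : ∀ μ i j x, Dq μ i j x = 0)
    (E : Fin 3 → Fin n → Fin n → (Fin n → ℝ) → ℝ)
    (hE : ∀ k α β x, E k α β x = -(1/(2*h0)) *
        (pd α (A k β) x + pd β (A k α) x - 2 * ∑ μ, A k μ x * Γ μ α β x))
    (B : Fin 3 → Fin n → Fin 3 → (Fin n → ℝ) → ℝ)
    (hB : ∀ k α i x, B k α i x = -(1/h0) * (∑ μ, A k μ x * F μ α i x)
        - (1/(2*h0)) * ∑ j, A j α x * eps k i j)
    (H : Fin 3 → Fin 3 → Fin 3 → ℝ)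
    (hH : ∀ i j k, H i j k = -(1/2) * eps i j k)
    -- the tensor-valued field
    (f : (Fin n → ℝ) → (Fin l → Fin 3) → ℂ)
    (hf_smooth : ContDiffOn ℝ (⊤ : ℕ∞) f U)
    (hf_sym : ∀ x ∈ U, IsTotallySymmetric l (f x))
    (hf_trace : ∀ x ∈ U, IsTraceless l (f x))
    -- the gauge-covariant derivative ∂_β − (1/h) A_{iβ} D_i
    (CD : Fin n → ((Fin n → ℝ) → (Fin l → Fin 3) → ℂ) → ((Fin n → ℝ) → (Fin l → Fin 3) → ℂ))
    (hCD : ∀ β u x, CD β u x = pd β u x - (1/h0) • ∑ i, A i β x • Dop l i (u x)) :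
    ∀ x ∈ U,
      (∑ α, ∑ β, gtinv α β x • pd α (pd β f) x)
      + (∑ i, ∑ j, ht i j x • Dop l i (Dop l j (f x)))
      + 2 • (∑ α, ∑ i, At α i x • pd α (fun y => Dop l i (f y)) x)
      + (∑ i, ((∑ α, ∑ β, E i α β x * gtinv α β x)
            + 2 * (∑ α, ∑ j, B i α j x * At α j x)
            + ∑ j, ∑ k, H i j k * ht j k x) • Dop l i (f x))
      + (∑ μ, (-(∑ α, ∑ β, Γ μ α β x * gtinv α β x)
            + 2 * (∑ α, ∑ j, F μ α j x * At α j x)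
            + ∑ j, ∑ k, Dq μ j k x * ht j k x) • pd μ f x)
      = (∑ α, ∑ β, gtinv α β x • (CD α (CD β f) x - ∑ μ, Γt μ α β x • CD μ f x))
        - ((l * (l + 1) : ℝ) / h0) • f x := by
  intro x hx
  have hU' : U ∈ nhds x := hU.mem_nhds hx
  have hfx : ContDiffAt ℝ (⊤ : ℕ∞) f x := hf_smooth.contDiffAt hU'
  have hfd : DifferentiableAt ℝ f x := hfx.differentiableAt (by simp)
  have hAd : ∀ i μ, DifferentiableAt ℝ (A i μ) x := fun i μ =>
    ((hA_smooth i μ).contDiffAt hU').differentiableAt (by simp)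
  have hpd : ∀ β, DifferentiableAt ℝ (pd β f) x := fun β =>
    ((hfx.fderiv_right (m := 1) (by norm_cast)).differentiableAt (by simp)).clm_apply
      (differentiableAt_const _)
  have hg : ∀ μ ν, gtinv μ ν x = gtinv ν μ x :=
    inverse_symm (g := fun μ ν => gt μ ν x) (fun μ ν => hgt_symm μ ν x) (hgt_inv x hx)
  have hpdD : ∀ α i, pd α (fun y => Dop l i (f y)) x = Dop l i (pd α f x) := fun α i =>
    pd_clm_comp (DopL l i) hfd α
  have hCD2 : ∀ α β, CD α (CD β f) x
      = (pd α (pd β f) x - (1/h0) • ∑ i, (pd α (A i β) x • Dop l i (f x)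
          + A i β x • Dop l i (pd α f x)))
        - (1/h0) • ∑ i, A i α x • Dop l i (pd β f x - (1/h0) • ∑ j, A j β x • Dop l j (f x)) := by
    intro α β
    have hfun : CD β f = fun y => pd β f y - (1/h0) • ∑ i, A i β y • DopL l i (f y) :=
      funext fun y => hCD β f y
    rw [hCD, hfun, pd_covariant (DopL l) (1/h0) (hpd β) hfd (fun i => hAd i β) α]
    rfl
  have hht_symm : ∀ j k, ht j k x = ht k j x := by
    intro j k
    rw [hht, hht, Finset.sum_comm]
    simp only [eq_comm (a := j)]
    congr 2
    refine Finset.sum_congr rfl fun μ _ => Finset.sum_congr rfl fun ν _ => ?_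
    rw [hg]
    ring
  have hHsum : ∀ i, ∑ j, ∑ k, H i j k * ht j k x = 0 := fun i =>
    sum_antisymm (H i) (fun j k => ht j k x) (fun j k => by rw [hH, hH, eps_swap]; ring) hht_symm
  have hΓsum : ∀ μ, ∑ α, ∑ β, Γ μ α β x * gtinv α β x
      = (∑ α, ∑ β, Γt μ α β x * gtinv α β x)
        - 2 * (1/h0) * ∑ α, ∑ i, F μ α i x * ∑ ν, gtinv α ν x * A i ν x := by
    intro μ
    simp only [hΓ]
    exact qlc_derivative_coefficient (fun α β => gtinv α β x) hg (fun i α => A i α x)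
      (fun α i => F μ α i x) (fun α β => Γt μ α β x) (1/h0)
  have hcoef_pd : ∀ μ, -(∑ α, ∑ β, Γ μ α β x * gtinv α β x)
      + 2 * (∑ α, ∑ j, F μ α j x * At α j x) + ∑ j, ∑ k, Dq μ j k x * ht j k x
      = -∑ α, ∑ β, Γt μ α β x * gtinv α β x := by
    intro μ
    have h1 : ∑ α, ∑ j, F μ α j x * At α j x
        = -(1/h0) * ∑ α, ∑ i, F μ α i x * ∑ ν, gtinv α ν x * A i ν x := by
      simp only [hAt, Finset.mul_sum]
      refine Finset.sum_congr rfl fun α _ => Finset.sum_congr rfl fun i _ =>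
        Finset.sum_congr rfl fun ν _ => ?_
      ring
    simp only [hΓsum, h1, hDq, zero_mul, Finset.sum_const_zero]
    ring
  have hcoef_D : ∀ i, (∑ α, ∑ β, E i α β x * gtinv α β x)
      + 2 * (∑ α, ∑ j, B i α j x * At α j x) + ∑ j, ∑ k, H i j k * ht j k x
      = -(1/h0) * (∑ α, ∑ β, gtinv α β x * pd α (A i β) x)
        + (1/h0) * ∑ μ, A i μ x * ∑ α, ∑ β, Γt μ α β x * gtinv α β x := by
    intro i
    have h1 : ∑ α, ∑ β, E i α β x * gtinv α β x
        = -(1/h0) * (∑ α, ∑ β, gtinv α β x * pd α (A i β) x)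
          + (1/h0) * ∑ μ, A i μ x * ∑ α, ∑ β, Γ μ α β x * gtinv α β x := by
      have hswap : ∑ α, ∑ β, gtinv α β x * pd β (A i α) x
          = ∑ α, ∑ β, gtinv α β x * pd α (A i β) x := by
        rw [Finset.sum_comm]
        refine Finset.sum_congr rfl fun α _ => Finset.sum_congr rfl fun β _ => ?_
        rw [hg]
      have hmul : ∑ μ, A i μ x * ∑ α, ∑ β, Γ μ α β x * gtinv α β x
          = ∑ α, ∑ β, (∑ μ, A i μ x * Γ μ α β x) * gtinv α β x := by
        simp only [Finset.mul_sum, Finset.sum_mul]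
        rw [Finset.sum_comm]
        refine Finset.sum_congr rfl fun α _ => ?_
        rw [Finset.sum_comm]
        refine Finset.sum_congr rfl fun β _ => Finset.sum_congr rfl fun μ _ => ?_
        ring
      have hterm : ∀ α β, E i α β x * gtinv α β x
          = -(1/(2*h0)) * (gtinv α β x * pd α (A i β) x)
            + -(1/(2*h0)) * (gtinv α β x * pd β (A i α) x)
            + (1/h0) * ((∑ μ, A i μ x * Γ μ α β x) * gtinv α β x) := by
        intro α β
        rw [hE]
        field_simp
        ring
      simp only [hterm, Finset.sum_add_distrib, ← Finset.mul_sum, hswap, hmul]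
      field_simp
      ring
    have h2 : ∑ α, ∑ j, B i α j x * At α j x
        = (1/h0)^2 * ∑ μ, A i μ x * ∑ α, ∑ j, F μ α j x * ∑ ν, gtinv α ν x * A j ν x := by
      have hterm : ∀ α j, B i α j x * At α j x
          = (1/h0)^2 * ((∑ μ, A i μ x * F μ α j x) * ∑ ν, gtinv α ν x * A j ν x)
            + (1/(2*h0^2)) * ((∑ k, A k α x * eps i j k) * ∑ ν, gtinv α ν x * A j ν x) := by
        intro α j
        rw [hB, hAt]
        field_simp
        ring
      have hmul : ∑ μ, A i μ x * ∑ α, ∑ j, F μ α j x * ∑ ν, gtinv α ν x * A j ν x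
          = ∑ α, ∑ j, (∑ μ, A i μ x * F μ α j x) * ∑ ν, gtinv α ν x * A j ν x := by
        obtain ⟨S, hS⟩ : ∃ S : Fin n → Fin 3 → ℝ, ∀ α j, ∑ ν, gtinv α ν x * A j ν x = S α j :=
          ⟨_, fun _ _ => rfl⟩
        simp only [hS, Finset.mul_sum, Finset.sum_mul]
        rw [Finset.sum_comm]
        refine Finset.sum_congr rfl fun α _ => ?_
        rw [Finset.sum_comm]
        refine Finset.sum_congr rfl fun j _ => Finset.sum_congr rfl fun μ _ => ?_
        ring
      have hzero : ∑ α, ∑ j, (∑ k, A k α x * eps i j k) * ∑ ν, gtinv α ν x * A j ν x = 0 := by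
        have := sum_antisymm (eps i) (fun j k => ∑ α, ∑ ν, gtinv α ν x * A j ν x * A k α x)
          (fun j k => eps_swap i j k) (fun j k => by
            rw [Finset.sum_comm]
            refine Finset.sum_congr rfl fun α _ => Finset.sum_congr rfl fun ν _ => ?_
            rw [hg]
            ring)
        rw [← this]
        conv_rhs => simp only [Finset.mul_sum]; rw [sum_comm_pairs]
        refine Finset.sum_congr rfl fun α _ => ?_
        conv_rhs => rw [Finset.sum_comm]
        refine Finset.sum_congr rfl fun j _ => ?_
        rw [Finset.sum_mul_sum, Finset.sum_comm]
        refine Finset.sum_congr rfl fun ν _ => Finset.sum_congr rfl fun k _ => ?_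
        ring
      simp only [hterm, Finset.sum_add_distrib, ← Finset.mul_sum, hmul, hzero]
      ring
    rw [h1, h2, hHsum]
    simp only [hΓsum, mul_sub, Finset.sum_sub_distrib]
    have h3 : ∀ μ, A i μ x * (2 * (1/h0) * ∑ α, ∑ j, F μ α j x * ∑ ν, gtinv α ν x * A j ν x)
        = 2 * (1/h0) * (A i μ x * ∑ α, ∑ j, F μ α j x * ∑ ν, gtinv α ν x * A j ν x) := by
      intro μ
      ring
    simp only [h3, ← Finset.mul_sum (a := 2 * (1/h0))]
    ring
  simp only [hcoef_pd, hcoef_D, hpdD, hCD2]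
  simp only [hCD, hht, hAt]
  have hfin := covariant_laplacian_expansion (fun i => (DopL l i).toLinearMap)
    (fun μ ν => gtinv μ ν x) hg (fun i μ => A i μ x) (fun α i β => pd α (A i β) x)
    (fun μ α β => Γt μ α β x) (1/h0) (l * (l + 1) : ℝ) (f x) (fun β => pd β f x)
    (fun α β => pd α (pd β f) x) (casimir (hf_sym x hx) (hf_trace x hx))
  simp only [ContinuousLinearMap.coe_coe, DopL_apply] at hfin
  rw [show ((l * (l + 1) : ℝ) / h0) = 1/h0 * (l * (l + 1)) by ring,
    show (1 / h0 ^ 2 : ℝ) = (1/h0)^2 by ring]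
  exact hfin
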